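/- There do not exist a positive real number s and positive integers a, b such that s^a = 1/3 and s^b = 2/3. -/

import Mathlib

/-- there is no positive real `s` and positive integers `a, b` with
`s^a = 1/3` and `s^b = 2/3`. -/
theorem stmt_17 :
    ¬ ∃ (s : ℝ) (a b : ℕ), 0 < s ∧ 0 < a ∧ 0 < b ∧
      s ^ a = 1 / 3 ∧ s ^ b = 2 / 3 := by
  rintro ⟨s, a, b, -, ha, -, h1, h2⟩
  -- Evaluate `s ^ (a * b)` in two ways and clear denominators: `3 ^ a` would be even.
  have h : ((1 : ℝ) / 3) ^ b = (2 / 3) ^ a := by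
    rw [← h1, ← h2, ← pow_mul, ← pow_mul, mul_comm]
  rw [div_pow, div_pow, one_pow, div_eq_div_iff (by positivity) (by positivity), one_mul] at h
  have hn : 3 ^ a = 2 ^ a * 3 ^ b := by exact_mod_cast h
  have h2a : 2 ∣ 3 ^ a := hn ▸ (dvd_pow_self 2 ha.ne').mul_right _
  have h23 : 2 ∣ 3 := Nat.prime_two.dvd_of_dvd_pow h2a
  omega
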